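/- arXiv:2601.18052 — 4 statements merged into one kernel-verified Lean document; each statement's English description precedes it below -/
import Mathlib

section
/- Let N ≥ 1, P ≥ 1, let D_j : ℝ^N → ℝ^{m_j} for j = 0, …, P be linear maps, and let λ_j > 0. Then the kernel of the block matrix H equals {(u_0, u_1, …, u_P) ∈ (ℝ^N)^{P+1} : D_j u_j = 0 for every j = 0, …, P and Σ_{j=0}^P u_j = 0}. -/
/-!
Block row `i` of `H u` is `s + λ_i D_iᵀ D_i u_i` with `s = ∑ j, u_j` (`blockH_mulVec_apply`), so
`D_j u_j = 0` and `s = 0` clearly give `H u = 0`. Conversely, pairing `H u` with `u` gives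
`‖s‖² + ∑ j, λ_j ‖D_j u_j‖²`; if `H u = 0`, this sum of nonnegative terms vanishes, hence so does
each of them.
-/

open Matrix

noncomputable def blockH {N : ℕ} (P : ℕ) (L : Fin (P + 1) → Matrix (Fin N) (Fin N) ℝ)
    (lam : Fin (P + 1) → ℝ) :
    Matrix (Fin (P + 1) × Fin N) (Fin (P + 1) × Fin N) ℝ :=
  fun p q =>
    if p.1 = q.1 then ((1 : Matrix (Fin N) (Fin N) ℝ) + lam p.1 • L p.1) p.2 q.2
    else if p.2 = q.2 then 1 else 0

/-- Block row `i` of `H u` is `∑ j, u_j + λ_i L_i u_i`: the identity inside the diagonal block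
supplies the `i`-th term of the sum. -/
lemma blockH_mulVec_apply {N P : ℕ} (L : Fin (P + 1) → Matrix (Fin N) (Fin N) ℝ)
    (lam : Fin (P + 1) → ℝ) (u : Fin (P + 1) × Fin N → ℝ) (i : Fin (P + 1)) (t : Fin N) :
    (blockH P L lam *ᵥ u) (i, t) =
      (∑ j, u (j, t)) + lam i * (L i *ᵥ (fun s => u (i, s))) t := by
  have entry : ∀ (j : Fin (P + 1)) (s : Fin N), blockH P L lam (i, t) (j, s) =
      (if t = s then 1 else 0) + (if i = j then lam i * L i t s else 0) := by
    intro j s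
    by_cases hij : i = j <;> simp [blockH, hij, Matrix.one_apply]
  simp only [Matrix.mulVec, dotProduct, Fintype.sum_prod_type, entry, add_mul,
    Finset.sum_add_distrib, ite_mul, zero_mul, one_mul, Finset.sum_ite_eq, Finset.mem_univ,
    if_true]
  congr 1
  rw [Finset.sum_comm, Finset.mul_sum]
  simp [mul_assoc]

/-- The kernel of the block matrix `H` consists exactly of those block vectors
`u = (u_0, …, u_P)` with `D_j u_j = 0` for every `j` and `Σ_j u_j = 0`. -/
theorem blockH_ker (N P : ℕ) (hN : 1 ≤ N) (hP : 1 ≤ P)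
    (m : Fin (P + 1) → ℕ)
    (D : ∀ j : Fin (P + 1), Matrix (Fin (m j)) (Fin N) ℝ)
    (lam : Fin (P + 1) → ℝ) (hlam : ∀ j, 0 < lam j) :
    ∀ u : Fin (P + 1) × Fin N → ℝ,
      u ∈ LinearMap.ker (blockH P (fun j => (D j)ᵀ * D j) lam).mulVecLin ↔
        ((∀ j : Fin (P + 1), D j *ᵥ (fun t => u (j, t)) = 0) ∧
          (∑ j : Fin (P + 1), (fun t => u (j, t))) = (0 : Fin N → ℝ)) := by
  intro u
  rw [LinearMap.mem_ker, Matrix.mulVecLin_apply]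
  have sum_eq : (∑ j : Fin (P + 1), (fun t => u (j, t))) = fun t => ∑ j, u (j, t) := by
    ext t
    simp
  rw [sum_eq]
  set s : Fin N → ℝ := fun t => ∑ j, u (j, t) with hs
  constructor
  · intro h
    have row : ∀ i, s + lam i • (((D i)ᵀ * D i) *ᵥ (fun t => u (i, t))) = 0 := by
      intro i
      ext t
      have := congrFun h (i, t)
      rw [blockH_mulVec_apply] at this
      simpa [hs] using this
    -- The pairing of block row `i` with `u_i`.
    have pair : ∀ i, (fun t => u (i, t)) ⬝ᵥ s +
        lam i * ((D i *ᵥ fun t => u (i, t)) ⬝ᵥ (D i *ᵥ fun t => u (i, t))) = 0 := by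
      intro i
      have := congrArg (fun v => (fun t => u (i, t)) ⬝ᵥ v) (row i)
      simpa only [dotProduct_add, dotProduct_smul, smul_eq_mul, ← Matrix.mulVec_mulVec,
        Matrix.dotProduct_mulVec _ (D i)ᵀ, Matrix.vecMul_transpose, dotProduct_zero] using this
    have total : s ⬝ᵥ s + ∑ i, lam i *
        ((D i *ᵥ fun t => u (i, t)) ⬝ᵥ (D i *ᵥ fun t => u (i, t))) = 0 := by
      have := Finset.sum_eq_zero fun i (_ : i ∈ Finset.univ) => pair i
      rwa [Finset.sum_add_distrib, ← sum_dotProduct, sum_eq] at this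
    have sq_nonneg : ∀ {k : ℕ} (v : Fin k → ℝ), 0 ≤ v ⬝ᵥ v := fun v =>
      Finset.sum_nonneg fun t _ => mul_self_nonneg (v t)
    have term_nonneg : ∀ i ∈ Finset.univ, 0 ≤ lam i *
        ((D i *ᵥ fun t => u (i, t)) ⬝ᵥ (D i *ᵥ fun t => u (i, t))) := fun i _ =>
      mul_nonneg (hlam i).le (sq_nonneg _)
    obtain ⟨hs0, hD0⟩ :=
      (add_eq_zero_iff_of_nonneg (sq_nonneg s) (Finset.sum_nonneg term_nonneg)).1 total
    refine ⟨fun j => ?_, dotProduct_self_eq_zero.1 hs0⟩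
    have := (Finset.sum_eq_zero_iff_of_nonneg term_nonneg).1 hD0 j (Finset.mem_univ j)
    exact dotProduct_self_eq_zero.1 ((mul_eq_zero.1 this).resolve_left (hlam j).ne')
  · rintro ⟨hD, hs0⟩
    ext ⟨i, t⟩
    have hst : ∑ j, u (j, t) = 0 := congrFun hs0 t
    rw [blockH_mulVec_apply, ← Matrix.mulVec_mulVec, hD i, hst]
    simp
end

section
/- Let N ≥ k + 1 with k ≥ 2, let D_0 = D_T be the second-difference operator on ℝ^N, let D_1 = D_k^{rec} be the seasonal recurrence operator of period k, and let λ_0, λ_1 > 0. Then the block matrix H (with P = 1) is invertible; equivalently, for every Y ∈ ℝ^N the penalized objective F(T, S) = ‖Y − T − S‖₂² + λ_0 ‖D_T T‖₂² + λ_1 ‖D_k^{rec} S‖₂² has a unique minimizer over ℝ^N × ℝ^N. -/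
/-!
The two claims rest on the symmetric bilinear form
`B(w, v) = (w₀ + w₁) · (v₀ + v₁) + l0 (D w₀) · (D v₀) + l1 (R w₁) · (R v₁)`, where `D` is the second
difference and `R` the seasonal recurrence: it is the form represented by `H` (`dotProduct_blockH`).

`B` is positive definite (`form_pos_def`, via `kernels_disjoint`). If `B(v, v) = 0`, then `v₁ = -v₀`, `D v₀ = 0` and
`R v₀ = 0`. The second-difference equation makes `v₀` affine. Since `k + 1 ≤ N`, there are at least
two windows, and subtracting the first window sum from the second gives `v₀(k) = v₀(0)`, so the slope
is zero; the first window sum then reads `k v₀(0) = 0`.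

Hence `H` is injective and so invertible. For a given `Y`, the solution `p` of `H p = (Y, Y)`
satisfies `F(q) = F(p) + B(q - p, q - p)` for all `q`, so `p` is the unique minimizer.
-/

open Matrix

/-- The second-difference operator `(D_T x)_t = x_{t+2} - 2 x_{t+1} + x_t`. -/
noncomputable def secondDiff (N : ℕ) : Matrix (Fin (N - 2)) (Fin N) ℝ :=
  fun t s =>
    if (s : ℕ) = (t : ℕ) then 1
    else if (s : ℕ) = (t : ℕ) + 1 then -2
    else if (s : ℕ) = (t : ℕ) + 2 then 1 else 0

/-- The seasonal recurrence operator of period `k`: `(D x)_t = x_t + x_{t+1} + ⋯ + x_{t+k-1}`. -/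
noncomputable def seasonalRec (N k : ℕ) : Matrix (Fin (N - k + 1)) (Fin N) ℝ :=
  fun t s => if (t : ℕ) ≤ (s : ℕ) ∧ (s : ℕ) < (t : ℕ) + k then 1 else 0

/-- The extension by zero of a finite vector to a sequence on `ℕ`, used to do index arithmetic. -/
noncomputable def extendZero {N : ℕ} (x : Fin N → ℝ) (n : ℕ) : ℝ :=
  if h : n < N then x ⟨n, h⟩ else 0

lemma extendZero_val {N : ℕ} (x : Fin N → ℝ) (i : Fin N) : extendZero x i = x i := by
  simp [extendZero]

lemma secondDiff_mulVec {N : ℕ} (x : Fin N → ℝ) (t : Fin (N - 2)) :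
    (secondDiff N *ᵥ x) t =
      extendZero x (t + 2) - 2 * extendZero x (t + 1) + extendZero x t := by
  have ht := t.2
  have hsum : (secondDiff N *ᵥ x) t = ∑ n ∈ Finset.range N,
      ((if n = (t : ℕ) then extendZero x n else 0)
        + (if n = (t : ℕ) + 1 then -2 * extendZero x n else 0)
        + (if n = (t : ℕ) + 2 then extendZero x n else 0)) := by
    rw [← Fin.sum_univ_eq_sum_range (fun n => ((if n = (t : ℕ) then extendZero x n else 0)
        + (if n = (t : ℕ) + 1 then -2 * extendZero x n else 0)
        + (if n = (t : ℕ) + 2 then extendZero x n else 0))) N]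
    rw [mulVec, dotProduct]
    refine Finset.sum_congr rfl fun s _ => ?_
    simp only [extendZero_val, secondDiff]
    split_ifs <;> first | omega | simp
  rw [hsum, Finset.sum_add_distrib, Finset.sum_add_distrib, Finset.sum_ite_eq',
    Finset.sum_ite_eq', Finset.sum_ite_eq', if_pos (Finset.mem_range.2 (by omega)),
    if_pos (Finset.mem_range.2 (by omega)), if_pos (Finset.mem_range.2 (by omega))]
  ring

lemma seasonalRec_mulVec {N k : ℕ} (hkN : k ≤ N) (x : Fin N → ℝ) (t : Fin (N - k + 1)) :
    (seasonalRec N k *ᵥ x) t = ∑ n ∈ Finset.Ico (t : ℕ) (t + k), extendZero x n := by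
  have ht := t.2
  have hfilter : Finset.Ico (t : ℕ) (t + k) =
      (Finset.range N).filter (fun n => (t : ℕ) ≤ n ∧ n < t + k) := by
    ext n
    simp only [Finset.mem_Ico, Finset.mem_filter, Finset.mem_range]
    omega
  rw [hfilter, Finset.sum_filter, ← Fin.sum_univ_eq_sum_range
    (fun n => if (t : ℕ) ≤ n ∧ n < t + k then extendZero x n else 0) N]
  rw [mulVec, dotProduct]
  refine Finset.sum_congr rfl fun s _ => ?_
  simp only [extendZero_val, seasonalRec]
  split_ifs <;> simp

/-- A vector annihilated by both operators vanishes: it is affine, equality of two consecutive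
window sums forces slope zero, and a window sum then forces the constant to be zero. -/
lemma kernels_disjoint {N k : ℕ} (hk : 2 ≤ k) (hN : k + 1 ≤ N) (x : Fin N → ℝ)
    (hD : secondDiff N *ᵥ x = 0) (hR : seasonalRec N k *ᵥ x = 0) : x = 0 := by
  set f := extendZero x with hf
  have hrec : ∀ n, n + 2 < N → f (n + 2) = 2 * f (n + 1) - f n := by
    intro n hn
    have h := congrFun hD ⟨n, by omega⟩
    rw [secondDiff_mulVec] at h
    simp only [Pi.zero_apply, ← hf] at h
    linarith
  have haff : ∀ n, n < N → f n = f 0 + n * (f 1 - f 0) := by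
    intro n
    induction n using Nat.strong_induction_on with
    | _ n ih =>
      intro hn
      match n with
      | 0 => simp
      | 1 => simp
      | m + 2 =>
        rw [hrec m hn, ih m (by omega) (by omega), ih (m + 1) (by omega) (by omega)]
        push_cast
        ring
  have hw0 : ∑ n ∈ Finset.Ico 0 k, f n = 0 := by
    have h := congrFun hR ⟨0, by omega⟩
    rw [seasonalRec_mulVec (by omega)] at h
    simpa using h
  have hw1 : ∑ n ∈ Finset.Ico 1 (k + 1), f n = 0 := by
    have h := congrFun hR ⟨1, by omega⟩
    rw [seasonalRec_mulVec (by omega)] at h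
    simpa [add_comm] using h
  have hfk : f k = f 0 := by
    rw [Finset.sum_eq_sum_Ico_succ_bot (by omega)] at hw0
    rw [Finset.sum_Ico_succ_top (by omega)] at hw1
    simp only [zero_add] at hw0
    linarith
  have hk0 : (k : ℝ) ≠ 0 := by
    have : k ≠ 0 := by omega
    exact_mod_cast this
  have hslope : f 1 - f 0 = 0 := by
    have h := haff k (by omega)
    rw [hfk] at h
    exact (mul_eq_zero.1 (show (k : ℝ) * (f 1 - f 0) = 0 by linarith)).resolve_left hk0
  have hconst : ∀ n, n < N → f n = f 0 := by
    intro n hn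
    rw [haff n hn, hslope]
    ring
  have hf0 : f 0 = 0 := by
    rw [Finset.sum_congr rfl (fun n hn => hconst n (by
      have := (Finset.mem_Ico.1 hn).2
      omega))] at hw0
    simp only [Finset.sum_const, Nat.card_Ico, nsmul_eq_mul, Nat.sub_zero] at hw0
    exact (mul_eq_zero.1 hw0).resolve_left hk0
  funext i
  rw [← extendZero_val x i, ← hf, hconst i i.2, hf0, Pi.zero_apply]

/-- The bilinear form represented by `blockH` with `P = 1`, in terms of the two components. -/
lemma dotProduct_blockH {N m₀ m₁ : ℕ} (D : Matrix (Fin m₀) (Fin N) ℝ)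
    (R : Matrix (Fin m₁) (Fin N) ℝ) (l0 l1 : ℝ) (w v : Fin 2 × Fin N → ℝ) :
    w ⬝ᵥ (blockH 1 ![Dᵀ * D, Rᵀ * R] ![l0, l1] *ᵥ v) =
      ((fun i => w (0, i)) + fun i => w (1, i)) ⬝ᵥ ((fun i => v (0, i)) + fun i => v (1, i))
        + l0 * ((D *ᵥ fun i => w (0, i)) ⬝ᵥ (D *ᵥ fun i => v (0, i)))
        + l1 * ((R *ᵥ fun i => w (1, i)) ⬝ᵥ (R *ᵥ fun i => v (1, i))) := by
  have hrow0 : (fun i => (blockH 1 ![Dᵀ * D, Rᵀ * R] ![l0, l1] *ᵥ v) (0, i)) =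
      (1 + l0 • (Dᵀ * D)) *ᵥ (fun i => v (0, i)) + 1 *ᵥ fun i => v (1, i) := by
    funext i
    simp only [mulVec, dotProduct, Fintype.sum_prod_type, Pi.add_apply]
    refine (Fin.sum_univ_two _).trans ?_
    simp [blockH, Matrix.one_apply]
  have hrow1 : (fun i => (blockH 1 ![Dᵀ * D, Rᵀ * R] ![l0, l1] *ᵥ v) (1, i)) =
      1 *ᵥ (fun i => v (0, i)) + (1 + l1 • (Rᵀ * R)) *ᵥ fun i => v (1, i) := by
    funext i
    simp only [mulVec, dotProduct, Fintype.sum_prod_type, Pi.add_apply]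
    refine (Fin.sum_univ_two _).trans ?_
    simp [blockH, Matrix.one_apply]
  have hsplit : w ⬝ᵥ (blockH 1 ![Dᵀ * D, Rᵀ * R] ![l0, l1] *ᵥ v) =
      (fun i => w (0, i)) ⬝ᵥ (fun i => (blockH 1 ![Dᵀ * D, Rᵀ * R] ![l0, l1] *ᵥ v) (0, i)) +
      (fun i => w (1, i)) ⬝ᵥ (fun i => (blockH 1 ![Dᵀ * D, Rᵀ * R] ![l0, l1] *ᵥ v) (1, i)) := by
    rw [dotProduct, Fintype.sum_prod_type, Fin.sum_univ_two]
    rfl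
  -- Transposition moves one factor `M` to the other side of the dot product.
  have hadj : ∀ {m : ℕ} (M : Matrix (Fin m) (Fin N) ℝ) (a b : Fin N → ℝ),
      a ⬝ᵥ ((Mᵀ * M) *ᵥ b) = (M *ᵥ a) ⬝ᵥ (M *ᵥ b) := by
    intro m M a b
    rw [← mulVec_mulVec, dotProduct_mulVec, vecMul_transpose]
  rw [hsplit, hrow0, hrow1]
  simp only [add_mulVec, one_mulVec, smul_mulVec, dotProduct_add, add_dotProduct,
    dotProduct_smul, smul_eq_mul, hadj]
  ring

/-- Positive definiteness of the quadratic form of `H`. -/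
lemma form_pos_def {N k : ℕ} (hk : 2 ≤ k) (hN : k + 1 ≤ N) {l0 l1 : ℝ} (h0 : 0 < l0)
    (h1 : 0 < l1) (T S : Fin N → ℝ)
    (h : (T + S) ⬝ᵥ (T + S) + l0 * ((secondDiff N *ᵥ T) ⬝ᵥ (secondDiff N *ᵥ T))
      + l1 * ((seasonalRec N k *ᵥ S) ⬝ᵥ (seasonalRec N k *ᵥ S)) ≤ 0) : T = 0 ∧ S = 0 := by
  have nn : ∀ {m : ℕ} (a : Fin m → ℝ), 0 ≤ a ⬝ᵥ a := fun a =>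
    Finset.sum_nonneg fun i _ => mul_self_nonneg (a i)
  have n1 := nn (T + S)
  have n2 := mul_nonneg h0.le (nn (secondDiff N *ᵥ T))
  have n3 := mul_nonneg h1.le (nn (seasonalRec N k *ᵥ S))
  have e1 : T + S = 0 := dotProduct_self_eq_zero.1 (by linarith)
  have e2 : secondDiff N *ᵥ T = 0 := dotProduct_self_eq_zero.1
    ((mul_eq_zero.1 (show l0 * _ = 0 by linarith)).resolve_left h0.ne')
  have e3 : seasonalRec N k *ᵥ S = 0 := dotProduct_self_eq_zero.1
    ((mul_eq_zero.1 (show l1 * _ = 0 by linarith)).resolve_left h1.ne')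
  have hS : S = -T := eq_neg_of_add_eq_zero_right e1
  have hT : T = 0 := kernels_disjoint hk hN T e2 (by
    rw [hS, mulVec_neg, neg_eq_zero] at e3
    exact e3)
  exact ⟨hT, by rw [hS, hT, neg_zero]⟩

/-- With the second-difference penalty on the trend and the seasonal recurrence penalty on the
seasonal component, the block matrix `H` (with `P = 1`) is invertible; equivalently, for every
`Y` the penalized objective has a unique minimizer. -/
theorem single_seasonality_recurrence_identifiable (N k : ℕ) (hk : 2 ≤ k) (hN : k + 1 ≤ N)
    (l0 l1 : ℝ) (h0 : 0 < l0) (h1 : 0 < l1) :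
    IsUnit (blockH 1
        ![(secondDiff N)ᵀ * secondDiff N, (seasonalRec N k)ᵀ * seasonalRec N k] ![l0, l1]) ∧
    ∀ Y : Fin N → ℝ, ∃! p : (Fin N → ℝ) × (Fin N → ℝ),
      ∀ q : (Fin N → ℝ) × (Fin N → ℝ),
        (Y - p.1 - p.2) ⬝ᵥ (Y - p.1 - p.2)
            + l0 * ((secondDiff N *ᵥ p.1) ⬝ᵥ (secondDiff N *ᵥ p.1))
            + l1 * ((seasonalRec N k *ᵥ p.2) ⬝ᵥ (seasonalRec N k *ᵥ p.2)) ≤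
          (Y - q.1 - q.2) ⬝ᵥ (Y - q.1 - q.2)
            + l0 * ((secondDiff N *ᵥ q.1) ⬝ᵥ (secondDiff N *ᵥ q.1))
            + l1 * ((seasonalRec N k *ᵥ q.2) ⬝ᵥ (seasonalRec N k *ᵥ q.2)) := by
  set H := blockH 1
    ![(secondDiff N)ᵀ * secondDiff N, (seasonalRec N k)ᵀ * seasonalRec N k] ![l0, l1] with hH
  have hinj : Function.Injective H.mulVec := by
    refine (injective_iff_map_eq_zero H.mulVecLin).2 fun v hv => ?_
    have hv' : H *ᵥ v = 0 := hv
    have hform := dotProduct_blockH (secondDiff N) (seasonalRec N k) l0 l1 v v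
    rw [← hH, hv', dotProduct_zero] at hform
    obtain ⟨hT, hS⟩ := form_pos_def hk hN h0 h1 _ _ hform.ge
    funext ⟨j, i⟩
    fin_cases j
    · exact congrFun hT i
    · exact congrFun hS i
  have hunit : IsUnit H := mulVec_injective_iff_isUnit.1 hinj
  refine ⟨hunit, fun Y => ?_⟩
  obtain ⟨v, hv⟩ := (mulVec_surjective_iff_isUnit.2 hunit) (fun p => Y p.2)
  -- The normal equations `H v = (Y, Y)` in weak form.
  have hweak : ∀ T S : Fin N → ℝ, (T + S) ⬝ᵥ Y =
      (T + S) ⬝ᵥ ((fun i => v (0, i)) + fun i => v (1, i))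
        + l0 * ((secondDiff N *ᵥ T) ⬝ᵥ (secondDiff N *ᵥ fun i => v (0, i)))
        + l1 * ((seasonalRec N k *ᵥ S) ⬝ᵥ (seasonalRec N k *ᵥ fun i => v (1, i))) := by
    intro T S
    have h := dotProduct_blockH (secondDiff N) (seasonalRec N k) l0 l1
      (fun p => ![T, S] p.1 p.2) v
    rw [← hH, hv] at h
    simp only [dotProduct, Fintype.sum_prod_type, Fin.sum_univ_two] at h
    rw [add_dotProduct]
    exact h
  generalize (fun i => v (0, i)) = T₀ at hweak
  generalize (fun i => v (1, i)) = S₀ at hweak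
  -- Completing the square around the solution of the normal equations.
  have hsq : ∀ q : (Fin N → ℝ) × (Fin N → ℝ),
      (Y - q.1 - q.2) ⬝ᵥ (Y - q.1 - q.2)
            + l0 * ((secondDiff N *ᵥ q.1) ⬝ᵥ (secondDiff N *ᵥ q.1))
            + l1 * ((seasonalRec N k *ᵥ q.2) ⬝ᵥ (seasonalRec N k *ᵥ q.2)) =
      ((Y - T₀ - S₀) ⬝ᵥ (Y - T₀ - S₀)
            + l0 * ((secondDiff N *ᵥ T₀) ⬝ᵥ (secondDiff N *ᵥ T₀))
            + l1 * ((seasonalRec N k *ᵥ S₀) ⬝ᵥ (seasonalRec N k *ᵥ S₀))) +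
      (((q.1 - T₀) + (q.2 - S₀)) ⬝ᵥ ((q.1 - T₀) + (q.2 - S₀))
        + l0 * ((secondDiff N *ᵥ (q.1 - T₀)) ⬝ᵥ (secondDiff N *ᵥ (q.1 - T₀)))
        + l1 * ((seasonalRec N k *ᵥ (q.2 - S₀)) ⬝ᵥ (seasonalRec N k *ᵥ (q.2 - S₀)))) := by
    rintro ⟨T, S⟩
    have e := hweak (T - T₀) (S - S₀)
    simp only [mulVec_sub, dotProduct_sub, sub_dotProduct, dotProduct_add, add_dotProduct] at e ⊢
    simp only [dotProduct_comm T₀ T, dotProduct_comm S₀ S, dotProduct_comm S T,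
      dotProduct_comm S₀ T₀, dotProduct_comm S₀ T, dotProduct_comm S T₀,
      dotProduct_comm T Y, dotProduct_comm S Y, dotProduct_comm T₀ Y, dotProduct_comm S₀ Y,
      dotProduct_comm (secondDiff N *ᵥ T₀) (secondDiff N *ᵥ T),
      dotProduct_comm (seasonalRec N k *ᵥ S₀) (seasonalRec N k *ᵥ S)] at e ⊢
    linear_combination -2 * e
  refine ⟨(T₀, S₀), fun q => ?_, fun p hp => ?_⟩
  · rw [hsq q]
    have nn : ∀ {m : ℕ} (a : Fin m → ℝ), 0 ≤ a ⬝ᵥ a := fun a =>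
      Finset.sum_nonneg fun i _ => mul_self_nonneg (a i)
    have n1 := nn ((q.1 - T₀) + (q.2 - S₀))
    have n2 := mul_nonneg h0.le (nn (secondDiff N *ᵥ (q.1 - T₀)))
    have n3 := mul_nonneg h1.le (nn (seasonalRec N k *ᵥ (q.2 - S₀)))
    dsimp only
    linarith
  · have h := hp (T₀, S₀)
    rw [hsq p] at h
    dsimp only at h
    obtain ⟨hT, hS⟩ := form_pos_def hk hN h0 h1 (p.1 - T₀) (p.2 - S₀) (by linarith)
    exact Prod.ext (sub_eq_zero.1 hT) (sub_eq_zero.1 hS)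
end

section
/- Let k₁, k₂ ≥ 1 and N ≥ k₁ + k₂, let D_0 = D_T be the second-difference operator on ℝ^N, let D_1 = D_{k₁}^{diff} and D_2 = D_{k₂}^{diff} be the seasonal differencing operators of periods k₁ and k₂, and let λ_0, λ_1, λ_2 > 0. Then the kernel of the block matrix H (with P = 2) has dimension 1 + gcd(k₁, k₂). -/
/-!
The quadratic form of `H` is `xᵀ H x = ‖x₀ + x₁ + x₂‖² + ∑ λ_j ‖D_j x_j‖²`, so `ker H` consists of
the triples with `x₀ + x₁ + x₂ = 0` and `D_j x_j = 0` for every `j` (`blockH_ker_iff`).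

Such a triple has `x₀` affine, say of slope `b`, `x₁` of period `k₁` and `x₂` of period `k₂`. As
`N ≥ k₁ + k₂`, the `k₂`-periodic extension `p` of `x₂` to `ℕ` satisfies `p (t + k₁) = p t - b k₁`
for all `t`. After `k₂` steps this gives `p t = p (t + k₁ k₂) = p t - b k₁ k₂`, hence `b = 0`. So
`x₀` is constant and `p` has both periods `k₁` and `k₂`, hence period `g = gcd (k₁, k₂)`
(`kernel_structure`). Conversely, any constant `a` and any `y : Fin g → ℝ` give the kernel element
`(-a, a - y (t mod g), y (t mod g))`. This parametrization (`param`) is linear and injective, which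
gives dimension `1 + g`.
-/

open Matrix

/-- The seasonal differencing operator of period `k`: `(D x)_t = x_{t+k} - x_t`. -/
noncomputable def seasonalDiff (N k : ℕ) : Matrix (Fin (N - k)) (Fin N) ℝ :=
  fun t s =>
    if (s : ℕ) = (t : ℕ) + k then 1
    else if (s : ℕ) = (t : ℕ) then -1 else 0

theorem blockH_mulVec {N P : ℕ} (L : Fin (P + 1) → Matrix (Fin N) (Fin N) ℝ)
    (lam : Fin (P + 1) → ℝ) (x : Fin (P + 1) × Fin N → ℝ) (j : Fin (P + 1)) (t : Fin N) :
    (blockH P L lam *ᵥ x) (j, t) =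
      ∑ i, x (i, t) + lam j * (L j *ᵥ fun s => x (j, s)) t := by
  have key : ∀ i s, blockH P L lam (j, t) (i, s) * x (i, s) =
      (if t = s then x (i, s) else 0) + (if j = i then lam j * (L j t s * x (j, s)) else 0) := by
    intro i s
    by_cases hji : j = i
    · subst hji
      by_cases hts : t = s
      · subst hts
        simp [blockH]
        ring
      · simp [blockH, hts]
        ring
    · by_cases hts : t = s <;> simp [blockH, hji, hts]
  simp only [Matrix.mulVec, dotProduct, Fintype.sum_prod_type, key, Finset.sum_add_distrib]
  congr 1
  · simp
  · rw [Finset.sum_comm]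
    simp [Finset.mul_sum]

/-- The kernel of a block matrix `H` with `L_j = D_jᵀ D_j`: the components sum to zero and each is
annihilated by its own `D_j`. The nontrivial direction pairs `H x` with `x`. -/
theorem blockH_ker_iff {N P : ℕ} {m : Fin (P + 1) → ℕ}
    (D : ∀ j, Matrix (Fin (m j)) (Fin N) ℝ)
    (lam : Fin (P + 1) → ℝ) (hlam : ∀ j, 0 < lam j) (x : Fin (P + 1) × Fin N → ℝ) :
    blockH P (fun j => (D j)ᵀ * D j) lam *ᵥ x = 0 ↔
      (∀ t, ∑ i, x (i, t) = 0) ∧ ∀ j, D j *ᵥ (fun s => x (j, s)) = 0 := by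
  constructor
  · intro h
    have h1 : ∀ j t, ∑ i, x (i, t) +
        lam j * (((D j)ᵀ * D j) *ᵥ fun s => x (j, s)) t = 0 := by
      intro j t
      rw [← blockH_mulVec (fun j => (D j)ᵀ * D j), h]
      rfl
    have hq : ∀ j, ∑ t, x (j, t) * (((D j)ᵀ * D j) *ᵥ fun s => x (j, s)) t =
        (D j *ᵥ fun s => x (j, s)) ⬝ᵥ (D j *ᵥ fun s => x (j, s)) := by
      intro j
      change (fun s => x (j, s)) ⬝ᵥ (((D j)ᵀ * D j) *ᵥ fun s => x (j, s)) = _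
      rw [← Matrix.mulVec_mulVec, Matrix.dotProduct_mulVec, Matrix.vecMul_transpose]
    have h2 : ∑ t, (∑ i, x (i, t)) * (∑ i, x (i, t)) +
        ∑ j, lam j * ((D j *ᵥ fun s => x (j, s)) ⬝ᵥ (D j *ᵥ fun s => x (j, s))) = 0 := by
      have h3 : ∑ j, ∑ t, x (j, t) * (∑ i, x (i, t) +
          lam j * (((D j)ᵀ * D j) *ᵥ fun s => x (j, s)) t) = 0 := by
        simp [h1]
      rw [← h3]
      simp only [mul_add, Finset.sum_add_distrib]
      congr 1
      · rw [Finset.sum_comm]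
        simp only [Finset.sum_mul]
      · refine Finset.sum_congr rfl fun j _ => ?_
        rw [← hq, Finset.mul_sum]
        exact Finset.sum_congr rfl fun t _ => by ring
    have hp : ∀ j, 0 ≤ (D j *ᵥ fun s => x (j, s)) ⬝ᵥ (D j *ᵥ fun s => x (j, s)) :=
      fun j => Finset.sum_nonneg fun _ _ => mul_self_nonneg _
    have hA : 0 ≤ ∑ t, (∑ i, x (i, t)) * (∑ i, x (i, t)) :=
      Finset.sum_nonneg fun _ _ => mul_self_nonneg _
    have hB : 0 ≤ ∑ j, lam j * ((D j *ᵥ fun s => x (j, s)) ⬝ᵥ (D j *ᵥ fun s => x (j, s))) :=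
      Finset.sum_nonneg fun j _ => mul_nonneg (hlam j).le (hp j)
    have hA0 : ∑ t, (∑ i, x (i, t)) * (∑ i, x (i, t)) = 0 := by linarith
    have hB0 : ∑ j, lam j *
        ((D j *ᵥ fun s => x (j, s)) ⬝ᵥ (D j *ᵥ fun s => x (j, s))) = 0 := by linarith
    rw [Finset.sum_eq_zero_iff_of_nonneg fun _ _ => mul_self_nonneg _] at hA0
    rw [Finset.sum_eq_zero_iff_of_nonneg
      fun j _ => mul_nonneg (hlam j).le (hp j)] at hB0
    refine ⟨fun t => mul_self_eq_zero.mp (hA0 t (Finset.mem_univ _)), fun j => ?_⟩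
    have := (mul_eq_zero.mp (hB0 j (Finset.mem_univ _))).resolve_left (hlam j).ne'
    exact dotProduct_self_eq_zero.mp this
  · rintro ⟨hs, hD⟩
    ext ⟨j, t⟩
    rw [blockH_mulVec, hs, ← Matrix.mulVec_mulVec, hD]
    simp

theorem secondDiff_ker_iff {N : ℕ} (f : ℕ → ℝ) :
    secondDiff N *ᵥ (fun s : Fin N => f s) = 0 ↔
      ∀ t, t + 2 < N → f (t + 2) - 2 * f (t + 1) + f t = 0 := by
  have key : ∀ t : Fin (N - 2), (secondDiff N *ᵥ (fun s : Fin N => f s)) t =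
      f (t + 2) - 2 * f (t + 1) + f t := by
    intro t
    have ht := t.2
    have e : ∀ s : Fin N, secondDiff N t s * f s =
        (if s = ⟨t + 2, by omega⟩ then f (t + 2) else 0)
        - (if s = ⟨t + 1, by omega⟩ then 2 * f (t + 1) else 0)
        + (if s = ⟨t, by omega⟩ then f t else 0) := by
      intro s
      simp only [secondDiff, Fin.ext_iff]
      split_ifs <;> first | omega | simp_all
    simp only [Matrix.mulVec, dotProduct, e, Finset.sum_add_distrib, Finset.sum_sub_distrib]
    simp
  constructor
  · intro h t ht
    have := key ⟨t, by omega⟩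
    rw [h] at this
    exact this.symm
  · intro h
    ext t
    rw [key]
    exact h t (by omega)

theorem seasonalDiff_ker_iff {N k : ℕ} (hk : 1 ≤ k) (f : ℕ → ℝ) :
    seasonalDiff N k *ᵥ (fun s : Fin N => f s) = 0 ↔
      ∀ t, t + k < N → f (t + k) = f t := by
  have key : ∀ t : Fin (N - k), (seasonalDiff N k *ᵥ (fun s : Fin N => f s)) t =
      f (t + k) - f t := by
    intro t
    have ht := t.2
    have e : ∀ s : Fin N, seasonalDiff N k t s * f s =
        (if s = ⟨t + k, by omega⟩ then f (t + k) else 0)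
        - (if s = ⟨t, by omega⟩ then f t else 0) := by
      intro s
      simp only [seasonalDiff, Fin.ext_iff]
      split_ifs <;> first | omega | simp_all
    simp only [Matrix.mulVec, dotProduct, e, Finset.sum_sub_distrib]
    simp
  constructor
  · intro h t ht
    have := key ⟨t, by omega⟩
    rw [h] at this
    exact sub_eq_zero.mp this.symm
  · intro h
    ext t
    rw [key]
    exact sub_eq_zero.mpr (h t (by omega))

theorem eq_mod_of_period {N k : ℕ} (f : ℕ → ℝ) (h : ∀ t, t + k < N → f (t + k) = f t) :
    ∀ t, t < N → f t = f (t % k) := by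
  intro t
  induction t using Nat.strong_induction_on with
  | _ t ih =>
    intro ht
    by_cases hk : k = 0
    · simp [hk]
    by_cases htk : t < k
    · rw [Nat.mod_eq_of_lt htk]
    · have h1 := h (t - k) (by omega)
      rw [Nat.sub_add_cancel (by omega)] at h1
      rw [h1, ih (t - k) (by omega) (by omega), ← Nat.mod_eq_sub_mod (by omega)]

theorem periodic_gcd {p : ℕ → ℝ} {a b : ℕ} (hb : 1 ≤ b) (ha : Function.Periodic p a)
    (hpb : Function.Periodic p b) : Function.Periodic p (Nat.gcd a b) := by
  rcases (Nat.gcd_le_right a hb).lt_or_eq with h | h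
  · obtain ⟨m, -, hm⟩ := Nat.exists_mul_mod_eq_gcd h
    intro t
    -- `a * m = gcd a b + b * n` is Bézout's identity within `ℕ`
    have hn := Nat.mod_add_div (a * m) b
    rw [hm] at hn
    have e1 := hpb.nat_mul (a * m / b) (t + Nat.gcd a b)
    have e2 := ha.nat_mul m t
    simp only [Nat.cast_id] at e1 e2
    rw [← e1, ← e2]
    congr 1
    linarith
  · rw [h]
    exact hpb

/-- An affine, a `k1`-periodic and a `k2`-periodic sequence of length `N ≥ k1 + k2` that sum to
zero: the affine one is constant and the `k2`-periodic one has period `gcd k1 k2`. -/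
theorem kernel_structure {N k1 k2 : ℕ} (h1 : 1 ≤ k1) (h2 : 1 ≤ k2) (hN : k1 + k2 ≤ N)
    (f0 f1 f2 : ℕ → ℝ) (hs : ∀ t, t < N → f0 t + f1 t + f2 t = 0)
    (e0 : ∀ t, t + 2 < N → f0 (t + 2) - 2 * f0 (t + 1) + f0 t = 0)
    (e1 : ∀ t, t + k1 < N → f1 (t + k1) = f1 t)
    (e2 : ∀ t, t + k2 < N → f2 (t + k2) = f2 t) :
    ∀ t, t < N → f0 t = f0 0 ∧ f2 t = f2 (t % Nat.gcd k1 k2) := by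
  obtain ⟨b, hb⟩ : ∃ b, b = f0 1 - f0 0 := ⟨_, rfl⟩
  have aff : ∀ t, t < N → f0 t = f0 0 + b * t := by
    intro t
    induction t using Nat.strong_induction_on with
    | _ t ih =>
      intro ht
      match t with
      | 0 => simp
      | 1 => simp [hb]
      | t + 2 =>
        have a1 := ih (t + 1) (by omega) (by omega)
        have a2 := ih t (by omega) (by omega)
        have a3 := e0 t ht
        push_cast at *
        linarith
  have hmod := eq_mod_of_period f2 e2
  -- the `k2`-periodic extension of `f2` to all of `ℕ`
  obtain ⟨p, hp⟩ : ∃ p : ℕ → ℝ, ∀ t, p t = f2 (t % k2) := ⟨_, fun _ => rfl⟩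
  have hp2 : Function.Periodic p k2 := fun t => by simp [hp]
  have hf2 : ∀ t, t < N → f2 t = p t := fun t ht => by rw [hp, hmod t ht]
  have step : ∀ t, p (t + k1) = p t - b * k1 := by
    intro t
    have hlt := Nat.mod_lt t h2
    have c1 : p (t + k1) = p (t % k2 + k1) := by simp [hp]
    have c2 : p t = p (t % k2) := by simp [hp]
    rw [c1, c2]
    -- `t % k2 + k1 < k1 + k2 ≤ N`, so the relation may be read off inside the window
    have d1 := hs (t % k2 + k1) (by omega)
    have d2 := hs (t % k2) (by omega)
    rw [e1 _ (by omega), aff _ (by omega), hf2 _ (by omega)] at d1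
    rw [aff _ (by omega), hf2 _ (by omega)] at d2
    push_cast at d1
    linarith
  have iter : ∀ n : ℕ, p (n * k1) = p 0 - n * (b * k1) := by
    intro n
    induction n with
    | zero => simp
    | succ n ih =>
      rw [Nat.succ_mul, step, ih]
      push_cast
      ring
  have hb0 : b = 0 := by
    have i1 := iter k2
    have i2 : p (k2 * k1) = p 0 := by simp [hp]
    have k1pos : (0 : ℝ) < k1 := by exact_mod_cast h1
    have k2pos : (0 : ℝ) < k2 := by exact_mod_cast h2
    have : (k2 : ℝ) * (b * k1) = 0 := by linarith
    simpa [k1pos.ne', k2pos.ne'] using this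
  have hp1 : Function.Periodic p k1 := fun t => by simp [step, hb0]
  have hg := periodic_gcd h2 hp1 hp2
  intro t ht
  refine ⟨by simp [aff t ht, hb0], ?_⟩
  rw [hf2 t ht, hf2 _ ((Nat.mod_le _ _).trans_lt ht)]
  exact (hg.map_mod_nat t).symm

/-- The parametrization `(a, y) ↦ (-a, a - y (t mod g), y (t mod g))` of the kernel by `ℝ × ℝ^g`. -/
def param (N g : ℕ) (hg : 0 < g) : (ℝ × (Fin g → ℝ)) →ₗ[ℝ] (Fin (2 + 1) × Fin N → ℝ) where
  toFun z q :=
    ![-z.1, z.1 - z.2 ⟨q.2 % g, Nat.mod_lt _ hg⟩, z.2 ⟨q.2 % g, Nat.mod_lt _ hg⟩] q.1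
  map_add' z w := by
    ext ⟨j, t⟩
    fin_cases j <;> simp <;> ring
  map_smul' c z := by
    ext ⟨j, t⟩
    fin_cases j <;> simp <;> ring

theorem param_injective {N g : ℕ} (hg : 0 < g) (hgN : g ≤ N) :
    Function.Injective (param N g hg) := by
  rintro ⟨a, y⟩ ⟨b, z⟩ h
  have ha := congrFun h (0, ⟨0, by omega⟩)
  simp [param] at ha
  refine Prod.ext ha (funext fun i => ?_)
  have hi := congrFun h (2, ⟨i, by omega⟩)
  simpa [param, Nat.mod_eq_of_lt i.2] using hi

/-- With second differencing on the trend and seasonal differencing penalties of periods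
`k₁, k₂` on the two seasonal components, the kernel of the block matrix `H` (with `P = 2`) has
dimension `1 + gcd(k₁, k₂)`. -/
theorem two_seasonality_differencing_nullity (N k1 k2 : ℕ) (h1 : 1 ≤ k1) (h2 : 1 ≤ k2)
    (hN : k1 + k2 ≤ N) (l0 l1 l2 : ℝ) (hl0 : 0 < l0) (hl1 : 0 < l1) (hl2 : 0 < l2) :
    Module.finrank ℝ (LinearMap.ker (blockH 2
        ![(secondDiff N)ᵀ * secondDiff N,
          (seasonalDiff N k1)ᵀ * seasonalDiff N k1,
          (seasonalDiff N k2)ᵀ * seasonalDiff N k2] ![l0, l1, l2]).mulVecLin) =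
      1 + Nat.gcd k1 k2 := by
  have hg : 0 < Nat.gcd k1 k2 := Nat.gcd_pos_of_pos_left _ h1
  have hgk : Nat.gcd k1 k2 ≤ k2 := Nat.gcd_le_right _ h2
  let D : ∀ j : Fin (2 + 1), Matrix (Fin (![N - 2, N - k1, N - k2] j)) (Fin N) ℝ :=
    Fin.cons (secondDiff N) (Fin.cons (seasonalDiff N k1) (Fin.cons (seasonalDiff N k2) finZeroElim))
  have hD : (![(secondDiff N)ᵀ * secondDiff N,
      (seasonalDiff N k1)ᵀ * seasonalDiff N k1,
      (seasonalDiff N k2)ᵀ * seasonalDiff N k2] : Fin (2 + 1) → Matrix (Fin N) (Fin N) ℝ) =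
      fun j => (D j)ᵀ * D j := by
    funext j
    fin_cases j <;> rfl
  have hlam : ∀ j, 0 < (![l0, l1, l2] : Fin (2 + 1) → ℝ) j := by
    intro j
    fin_cases j <;> simpa
  have mem : ∀ f : Fin (2 + 1) → ℕ → ℝ,
      blockH 2 (fun j => (D j)ᵀ * D j) ![l0, l1, l2] *ᵥ (fun q => f q.1 q.2) = 0 ↔
      (∀ t, t < N → f 0 t + f 1 t + f 2 t = 0) ∧
      (∀ t, t + 2 < N → f 0 (t + 2) - 2 * f 0 (t + 1) + f 0 t = 0) ∧
      (∀ t, t + k1 < N → f 1 (t + k1) = f 1 t) ∧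
      (∀ t, t + k2 < N → f 2 (t + k2) = f 2 t) := by
    intro f
    rw [blockH_ker_iff D _ hlam, ← secondDiff_ker_iff, ← seasonalDiff_ker_iff h1,
      ← seasonalDiff_ker_iff h2]
    refine and_congr ?_ ?_
    · simp only [Fin.forall_iff]
      refine forall₂_congr fun t _ => ?_
      rw [show ∑ i, f i t = f 0 t + f 1 t + f 2 t from Fin.sum_univ_three fun i => f i t]
    · constructor
      · exact fun h => ⟨h 0, h 1, h 2⟩
      · rintro ⟨a, b, c⟩ j
        fin_cases j
        exacts [a, b, c]
  have hker : LinearMap.ker (blockH 2 (fun j => (D j)ᵀ * D j) ![l0, l1, l2]).mulVecLin =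
      LinearMap.range (param N (Nat.gcd k1 k2) hg) := by
    ext x
    rw [LinearMap.mem_ker, Matrix.mulVecLin_apply, LinearMap.mem_range]
    constructor
    · intro hx
      let f : Fin (2 + 1) → ℕ → ℝ := fun j t => if h : t < N then x (j, ⟨t, h⟩) else 0
      have hf : x = fun q => f q.1 q.2 := by
        funext q
        simp [f]
      rw [hf, mem] at hx
      obtain ⟨hs, e0, e1, e2⟩ := hx
      have hst := kernel_structure h1 h2 hN _ _ _ hs e0 e1 e2
      refine ⟨(-f 0 0, fun i => f 2 i), ?_⟩
      rw [hf]
      funext ⟨j, t⟩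
      obtain ⟨s0, s2⟩ := hst t t.2
      have ss := hs t t.2
      fin_cases j
      · simp [param, s0]
      · simp only [param, LinearMap.coe_mk, AddHom.coe_mk]
        change -f 0 0 - f 2 (t % Nat.gcd k1 k2) = f 1 t
        rw [← s2, ← s0]
        linarith
      · exact s2.symm
    · rintro ⟨⟨a, y⟩, rfl⟩
      have := (mem fun j t => ![-a, a - y ⟨t % Nat.gcd k1 k2, Nat.mod_lt _ hg⟩,
        y ⟨t % Nat.gcd k1 k2, Nat.mod_lt _ hg⟩] j).2 ?_
      · exact this
      · have m1 : ∀ t, (t + k1) % Nat.gcd k1 k2 = t % Nat.gcd k1 k2 := fun t => by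
          rw [Nat.add_mod, Nat.mod_eq_zero_of_dvd (Nat.gcd_dvd_left k1 k2)]
          simp
        have m2 : ∀ t, (t + k2) % Nat.gcd k1 k2 = t % Nat.gcd k1 k2 := fun t => by
          rw [Nat.add_mod, Nat.mod_eq_zero_of_dvd (Nat.gcd_dvd_right k1 k2)]
          simp
        refine ⟨fun t _ => ?_, fun t _ => ?_, fun t _ => ?_, fun t _ => ?_⟩
        · simp
          ring
        · simp
          ring
        · simp [m1]
        · simp [m2]
  rw [hD, hker, LinearMap.finrank_range_of_inj (param_injective hg (by omega))]
  simp
end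

section
/- Let N ≥ 1, P ≥ 1, and for each j = 0, …, P let D_j^1, …, D_j^{q_j} : ℝ^N → ℝ^{m_{j,m}} be linear maps with scalars λ_j^m > 0 for m = 1, …, q_j. Set V_j = ∩_{m=1}^{q_j} ker D_j^m. Then the multi-penalty block matrix H is invertible if and only if the subspaces V_0, V_1, …, V_P of ℝ^N are linearly independent, i.e. Σ_{j=0}^P dim V_j = dim(V_0 + V_1 + ⋯ + V_P). -/
/-!
The kernel of `H` consists of the families `(x_j)` with `x_j ∈ V_j` and `Σ_j x_j = 0`. Indeed, with
`s = Σ_k x_k`, the `j`-th block of `H x` is `M_j x_j + s`, so pairing `H x` with `x` gives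
`Σ_j Σ_m λ_j^m ‖D_j^m x_j‖² + ‖s‖²`, a sum of nonnegative terms
(`dotProduct_blockHMulti_mulVec`, `blockHMulti_mulVec_eq_zero_iff`).
Hence `H` is injective exactly when the addition map `∏_j V_j → ℝ^N` is. The range of this
map is `V_0 + ⋯ + V_P`, so by rank–nullity its injectivity is the dimension equality
(`sum_finrank_eq_iff`).
-/

open Matrix

/-- The multi-penalty block matrix: the `j`-th diagonal block is `A_j = I_N + M_j` (with
`M_j = Σ_m λ_j^m (D_j^m)ᵀ D_j^m`) and every off-diagonal block is the identity. -/
noncomputable def blockHMulti {N : ℕ} (P : ℕ) (M : Fin (P + 1) → Matrix (Fin N) (Fin N) ℝ) :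
    Matrix (Fin (P + 1) × Fin N) (Fin (P + 1) × Fin N) ℝ :=
  fun p q =>
    if p.1 = q.1 then ((1 : Matrix (Fin N) (Fin N) ℝ) + M p.1) p.2 q.2
    else if p.2 = q.2 then 1 else 0

/-- Rank–nullity for the addition map `∏ j, V j → E`, whose range is `⨆ j, V j`. -/
lemma sum_finrank_eq_iff {ι E : Type*} [Fintype ι] [AddCommGroup E] [Module ℝ E]
    [FiniteDimensional ℝ E] (V : ι → Submodule ℝ E) :
    ∑ j, Module.finrank ℝ (V j) = Module.finrank ℝ ↥(⨆ j, V j) ↔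
      ∀ x : ι → E, (∀ j, x j ∈ V j) → ∑ j, x j = 0 → x = 0 := by
  classical
  let f : (∀ j, V j) →ₗ[ℝ] E := ∑ j, (V j).subtype ∘ₗ LinearMap.proj j
  have hf (x : ∀ j, V j) : f x = ∑ j, (x j : E) := by simp [f]
  have hr : LinearMap.range f = ⨆ j, V j := by
    apply le_antisymm
    · rintro _ ⟨x, rfl⟩
      rw [hf]
      exact Submodule.sum_mem _ fun j _ => Submodule.mem_iSup_of_mem j (x j).2
    · refine iSup_le fun j v hv => ⟨Pi.single j ⟨v, hv⟩, ?_⟩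
      rw [hf, Finset.sum_eq_single j]
      · simp
      · intro k _ hk
        simp [hk]
      · simp
  have hrn := f.finrank_range_add_finrank_ker
  rw [hr, Module.finrank_pi_fintype] at hrn
  have hker : LinearMap.ker f = ⊥ ↔ ∀ x : ι → E, (∀ j, x j ∈ V j) → ∑ j, x j = 0 → x = 0 := by
    rw [LinearMap.ker_eq_bot']
    constructor
    · intro h x hx hs
      have := h (fun j => ⟨x j, hx j⟩) (by rw [hf]; exact hs)
      funext j
      exact congrArg Subtype.val (congrFun this j)
    · intro h x hx
      have := h (fun j => (x j : E)) (fun j => (x j).2) (by rw [← hf]; exact hx)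
      funext j
      exact Subtype.ext (congrFun this j)
  rw [← hker, ← Submodule.finrank_eq_zero (R := ℝ)]
  omega

lemma blockHMulti_mulVec_apply {N P : ℕ} (M : Fin (P + 1) → Matrix (Fin N) (Fin N) ℝ)
    (x : Fin (P + 1) × Fin N → ℝ) (j : Fin (P + 1)) (a : Fin N) :
    (blockHMulti P M *ᵥ x) (j, a) = (M j *ᵥ fun b => x (j, b)) a + ∑ k, x (k, a) := by
  -- Entrywise, `H` is the block-diagonal matrix of the `M j` plus the all-identity block matrix.
  have h (k : Fin (P + 1)) (b : Fin N) : blockHMulti P M (j, a) (k, b) =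
      (if j = k then M j a b else 0) + if a = b then 1 else 0 := by
    by_cases hjk : j = k <;> simp [blockHMulti, hjk, Matrix.one_apply, add_comm]
  simp [Matrix.mulVec, dotProduct, Fintype.sum_prod_type, h, add_mul, Finset.sum_add_distrib,
    ite_mul, Finset.sum_ite_irrel]

lemma dotProduct_blockHMulti_mulVec {N P : ℕ} (M : Fin (P + 1) → Matrix (Fin N) (Fin N) ℝ)
    (x : Fin (P + 1) × Fin N → ℝ) :
    x ⬝ᵥ (blockHMulti P M *ᵥ x) =
      (∑ j, (fun b => x (j, b)) ⬝ᵥ (M j *ᵥ fun b => x (j, b))) + ∑ a, (∑ k, x (k, a)) ^ 2 := by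
  simp only [dotProduct, Fintype.sum_prod_type, blockHMulti_mulVec_apply, mul_add,
    Finset.sum_add_distrib]
  congr 1
  rw [Finset.sum_comm]
  simp only [sq, Finset.sum_mul]

lemma dotProduct_penalty_mulVec {N q : ℕ} {msize : Fin q → ℕ}
    (D : ∀ m : Fin q, Matrix (Fin (msize m)) (Fin N) ℝ) (lam : Fin q → ℝ) (v : Fin N → ℝ) :
    v ⬝ᵥ ((∑ m, lam m • ((D m)ᵀ * D m)) *ᵥ v) =
      ∑ m, lam m * ((D m *ᵥ v) ⬝ᵥ (D m *ᵥ v)) := by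
  rw [Matrix.sum_mulVec, dotProduct_sum]
  refine Finset.sum_congr rfl fun m _ => ?_
  rw [Matrix.smul_mulVec, dotProduct_smul, smul_eq_mul, ← Matrix.mulVec_mulVec,
    Matrix.dotProduct_mulVec, Matrix.vecMul_transpose]

lemma blockHMulti_mulVec_eq_zero_iff {N P : ℕ} {q : Fin (P + 1) → ℕ}
    {msize : ∀ j : Fin (P + 1), Fin (q j) → ℕ}
    (D : ∀ (j : Fin (P + 1)) (m : Fin (q j)), Matrix (Fin (msize j m)) (Fin N) ℝ)
    (lam : ∀ j : Fin (P + 1), Fin (q j) → ℝ) (hlam : ∀ j m, 0 < lam j m)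
    (x : Fin (P + 1) × Fin N → ℝ) :
    blockHMulti P (fun j => ∑ m, lam j m • ((D j m)ᵀ * D j m)) *ᵥ x = 0 ↔
      (∀ j m, D j m *ᵥ (fun b => x (j, b)) = 0) ∧ ∀ a, ∑ k, x (k, a) = 0 := by
  constructor
  · intro h
    have hdot := dotProduct_blockHMulti_mulVec
      (fun j => ∑ m, lam j m • ((D j m)ᵀ * D j m)) x
    simp only [h, dotProduct_zero, dotProduct_penalty_mulVec] at hdot
    have hnn (j : Fin (P + 1)) (m : Fin (q j)) : 0 ≤ lam j m *
        ((D j m *ᵥ fun b => x (j, b)) ⬝ᵥ (D j m *ᵥ fun b => x (j, b))) :=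
      mul_nonneg (hlam j m).le (Finset.sum_nonneg fun i _ => mul_self_nonneg _)
    have h1 := Finset.sum_nonneg fun j (_ : j ∈ Finset.univ) =>
      Finset.sum_nonneg fun m (_ : m ∈ Finset.univ) => hnn j m
    have h2 := Finset.sum_nonneg fun a (_ : a ∈ Finset.univ) => sq_nonneg (∑ k, x (k, a))
    constructor
    · intro j m
      have h3 := (Finset.sum_eq_zero_iff_of_nonneg fun j _ =>
        Finset.sum_nonneg fun m _ => hnn j m).1 (le_antisymm (by linarith) h1) j
        (Finset.mem_univ j)
      have h4 := (Finset.sum_eq_zero_iff_of_nonneg fun m _ => hnn j m).1 h3 m (Finset.mem_univ m)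
      exact dotProduct_self_eq_zero.1 ((mul_eq_zero.1 h4).resolve_left (hlam j m).ne')
    · intro a
      exact pow_eq_zero_iff two_ne_zero |>.1 <|
        (Finset.sum_eq_zero_iff_of_nonneg fun a _ => sq_nonneg (∑ k, x (k, a))).1
          (le_antisymm (by linarith) h2) a (Finset.mem_univ a)
  · rintro ⟨hD, hs⟩
    funext ⟨j, a⟩
    rw [blockHMulti_mulVec_apply, hs, Matrix.sum_mulVec]
    simp [Matrix.smul_mulVec, ← Matrix.mulVec_mulVec, hD]

/-- **Identifiability with Multiple Penalties.** With `V_j = ∩_m ker D_j^m`, the multi-penalty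
block matrix `H` is invertible iff the subspaces `V_0, …, V_P` are linearly independent, i.e.
`Σ_j dim V_j = dim (V_0 + ⋯ + V_P)`. -/
theorem blockHMulti_isUnit_iff (N P : ℕ) (hN : 1 ≤ N) (hP : 1 ≤ P)
    (q : Fin (P + 1) → ℕ) (hq : ∀ j, 1 ≤ q j)
    (msize : ∀ j : Fin (P + 1), Fin (q j) → ℕ)
    (D : ∀ (j : Fin (P + 1)) (m : Fin (q j)), Matrix (Fin (msize j m)) (Fin N) ℝ)
    (lam : ∀ j : Fin (P + 1), Fin (q j) → ℝ) (hlam : ∀ j m, 0 < lam j m) :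
    IsUnit (blockHMulti P (fun j => ∑ m, lam j m • ((D j m)ᵀ * D j m))) ↔
      ∑ j : Fin (P + 1), Module.finrank ℝ ↥(⨅ m, LinearMap.ker (D j m).mulVecLin) =
        Module.finrank ℝ ↥(⨆ j : Fin (P + 1), ⨅ m, LinearMap.ker (D j m).mulVecLin) := by
  rw [sum_finrank_eq_iff, ← Matrix.mulVec_injective_iff_isUnit, ← Matrix.coe_mulVecLin,
    ← LinearMap.ker_eq_bot, LinearMap.ker_eq_bot']
  simp only [Matrix.mulVecLin_apply, blockHMulti_mulVec_eq_zero_iff D lam hlam,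
    Submodule.mem_iInf, LinearMap.mem_ker]
  constructor
  · intro h x hx hs
    have h0 := h (fun p => x p.1 p.2) ⟨hx, fun a => by simpa using congrFun hs a⟩
    funext j a
    exact congrFun h0 (j, a)
  · rintro h x ⟨hx, hs⟩
    have h0 := h (fun j a => x (j, a)) hx (by funext a; simpa using hs a)
    funext ⟨j, a⟩
    exact congrFun (congrFun h0 j) a
end
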